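/- Under the IV assumptions (Independence, Relevance, Monotonicity, Exclusion), the reduced form decomposes as ΔE[Y|Z] = E[Y(1,1)−Y(0,0); {C1,C2}] + E[Y(1,0)−Y(0,0); {C1,N2}] + E[Y(1,1)−Y(0,1); {C1,A2}] + E[Y(0,1)−Y(0,0); {N1,C2}] + E[Y(1,1)−Y(1,0); {A1,C2}]. (Lemma 1.5) -/

import Mathlib

open MeasureTheory ProbabilityTheory

noncomputable section

variable {Ω : Type*} [MeasurableSpace Ω]

/-- Observed first-part treatment: `D1 = D1(1)·Z + D1(0)·(1−Z)`. -/
def obsD1 (Z : Ω → ℝ) (D1 : Bool → Ω → ℝ) (ω : Ω) : ℝ :=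
  D1 true ω * Z ω + D1 false ω * (1 - Z ω)

/-- Observed second-part treatment. -/
def obsD2 (Z : Ω → ℝ) (D1 : Bool → Ω → ℝ) (D2 : Bool → Bool → Ω → ℝ) (ω : Ω) : ℝ :=
  (D2 true true ω * obsD1 Z D1 ω + D2 true false ω * (1 - obsD1 Z D1 ω)) * Z ω +
  (D2 false true ω * obsD1 Z D1 ω + D2 false false ω * (1 - obsD1 Z D1 ω)) * (1 - Z ω)

/-- Summary treatment `D∧ = D1·D2`. -/
def obsDand (Z : Ω → ℝ) (D1 : Bool → Ω → ℝ) (D2 : Bool → Bool → Ω → ℝ) (ω : Ω) : ℝ :=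
  obsD1 Z D1 ω * obsD2 Z D1 D2 ω

/-- Summary treatment `D∨ = D1 + D2 − D1·D2`. -/
def obsDor (Z : Ω → ℝ) (D1 : Bool → Ω → ℝ) (D2 : Bool → Bool → Ω → ℝ) (ω : Ω) : ℝ :=
  obsD1 Z D1 ω + obsD2 Z D1 D2 ω - obsD1 Z D1 ω * obsD2 Z D1 D2 ω

/-- Observed outcome `Y = Σ_{d1,d2} Y(Z,d1,d2)·1{D1=d1, D2=d2}`, written out using that the
observed treatments and the instrument are {0,1}-valued. The first index of `Yp` is `z`, the
second is `d1`, the third is `d2`. -/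
def obsY (Z : Ω → ℝ) (D1 : Bool → Ω → ℝ) (D2 : Bool → Bool → Ω → ℝ)
    (Yp : Bool → Bool → Bool → Ω → ℝ) (ω : Ω) : ℝ :=
  (Yp true true true ω * obsD1 Z D1 ω * obsD2 Z D1 D2 ω +
   Yp true false true ω * (1 - obsD1 Z D1 ω) * obsD2 Z D1 D2 ω +
   Yp true true false ω * obsD1 Z D1 ω * (1 - obsD2 Z D1 D2 ω) +
   Yp true false false ω * (1 - obsD1 Z D1 ω) * (1 - obsD2 Z D1 D2 ω)) * Z ω +
  (Yp false true true ω * obsD1 Z D1 ω * obsD2 Z D1 D2 ω +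
   Yp false false true ω * (1 - obsD1 Z D1 ω) * obsD2 Z D1 D2 ω +
   Yp false true false ω * obsD1 Z D1 ω * (1 - obsD2 Z D1 D2 ω) +
   Yp false false false ω * (1 - obsD1 Z D1 ω) * (1 - obsD2 Z D1 D2 ω)) * (1 - Z ω)

/-- `ΔE[A|Z] := E[A | Z = 1] − E[A | Z = 0]`, expectations under conditional measures. -/
def dE (μ : Measure Ω) (Z A : Ω → ℝ) : ℝ :=
  (∫ ω, A ω ∂(μ[|Z ⁻¹' {1}])) - (∫ ω, A ω ∂(μ[|Z ⁻¹' {0}]))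

/-- The full-complier event `{C1,C2}`. -/
def CCev (D1 : Bool → Ω → ℝ) (D2 : Bool → Bool → Ω → ℝ) : Set Ω :=
  {ω | D1 true ω - D1 false ω = 1 ∧ D2 true true ω - D2 false false ω = 1}

/-- The mover event `{C1,N2}`. -/
def CNev (D1 : Bool → Ω → ℝ) (D2 : Bool → Bool → Ω → ℝ) : Set Ω :=
  {ω | D1 true ω - D1 false ω = 1 ∧ D2 true true ω = 0 ∧ D2 false false ω = 0}

/-- The mover event `{C1,A2}`. -/
def CAev (D1 : Bool → Ω → ℝ) (D2 : Bool → Bool → Ω → ℝ) : Set Ω :=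
  {ω | D1 true ω - D1 false ω = 1 ∧ D2 true true ω = 1 ∧ D2 false false ω = 1}

/-- The mover event `{N1,C2}`. -/
def NCev (D1 : Bool → Ω → ℝ) (D2 : Bool → Bool → Ω → ℝ) : Set Ω :=
  {ω | D1 true ω = 0 ∧ D1 false ω = 0 ∧ D2 true false ω - D2 false false ω = 1}

/-- The mover event `{A1,C2}`. -/
def ACev (D1 : Bool → Ω → ℝ) (D2 : Bool → Bool → Ω → ℝ) : Set Ω :=
  {ω | D1 true ω = 1 ∧ D1 false ω = 1 ∧ D2 true true ω - D2 false true ω = 1}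

/-!
Write `Y^z` for the outcome a unit would have if its instrument were set to `z`. On `{Z = z}` the
observed outcome is `Y^z`, which is independent of `Z`, so `ΔE[Y|Z] = E[Y^1 − Y^0]`. Setting the
instrument to `z` realizes the treatment pair `(D1(z), D2(z, D1(z)))`. By monotonicity each of its
two components is a never-taker, a complier or an always-taker response. Of the nine combinations
the four without a complier have `Y^1 = Y^0`, and the other five are the events of the
decomposition.
-/

section Conditioning

lemma measure_preimage_singleton_ne_zero {γ : Type*} {μ : Measure Ω} [IsProbabilityMeasure μ]
    {Z : Ω → γ} {a b : γ} (hZ : ∀ ω, Z ω = a ∨ Z ω = b) (hb : μ (Z ⁻¹' {b}) < 1) :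
    μ (Z ⁻¹' {a}) ≠ 0 := by
  intro ha
  have hcover : Z ⁻¹' {a} ∪ Z ⁻¹' {b} = Set.univ := Set.eq_univ_of_forall hZ
  have hle : μ Set.univ ≤ μ (Z ⁻¹' {a}) + μ (Z ⁻¹' {b}) := hcover ▸ measure_union_le _ _
  rw [measure_univ, ha, zero_add] at hle
  exact hle.not_gt hb

lemma integral_cond_preimage_eq_integral {β γ E : Type*} [MeasurableSpace β] [MeasurableSpace γ]
    [NormedAddCommGroup E] [NormedSpace ℝ E] {μ : Measure Ω} [IsFiniteMeasure μ]
    {X : Ω → β} {Z : Ω → γ} (hind : IndepFun X Z μ) (hX : AEMeasurable X μ) (hZ : Measurable Z)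
    {f : β → E} (hf : AEStronglyMeasurable f (μ.map X))
    {s : Set γ} (hs : MeasurableSet s) (hμs : μ (Z ⁻¹' s) ≠ 0) :
    ∫ ω, f (X ω) ∂μ[|Z ⁻¹' s] = ∫ ω, f (X ω) ∂μ := by
  have hset : ∫ ω in Z ⁻¹' s, f (X ω) ∂μ = μ.real (Z ⁻¹' s) • ∫ ω, f (X ω) ∂μ :=
    Indep.setIntegral_eq_smul hZ.comap_le hind.symm hX ⟨s, hs, rfl⟩ hf
  have hreal : μ.real (Z ⁻¹' s) ≠ 0 := (measureReal_ne_zero_iff).2 hμs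
  rw [ProbabilityTheory.cond, integral_smul_measure, hset, ENNReal.toReal_inv]
  exact inv_smul_smul₀ hreal _

lemma dE_eq_integral_sub {μ : Measure Ω} [IsFiniteMeasure μ] {Z A V₁ V₀ : Ω → ℝ}
    (hZ : Measurable Z) (hZ₁ : μ (Z ⁻¹' {1}) ≠ 0) (hZ₀ : μ (Z ⁻¹' {0}) ≠ 0)
    (hV₁ : Integrable V₁ μ) (hV₀ : Integrable V₀ μ)
    (hind₁ : IndepFun V₁ Z μ) (hind₀ : IndepFun V₀ Z μ)
    (hA₁ : ∀ ω, Z ω = 1 → A ω = V₁ ω) (hA₀ : ∀ ω, Z ω = 0 → A ω = V₀ ω) :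
    dE μ Z A = ∫ ω, (V₁ ω - V₀ ω) ∂μ := by
  have hcond {V : Ω → ℝ} {z : ℝ} (hV : Integrable V μ) (hind : IndepFun V Z μ)
      (hz : μ (Z ⁻¹' {z}) ≠ 0) (hAV : ∀ ω, Z ω = z → A ω = V ω) :
      ∫ ω, A ω ∂μ[|Z ⁻¹' {z}] = ∫ ω, V ω ∂μ :=
    calc ∫ ω, A ω ∂μ[|Z ⁻¹' {z}]
        = ∫ ω, V ω ∂μ[|Z ⁻¹' {z}] :=
          integral_congr_ae (ae_cond_of_forall_mem (hZ (measurableSet_singleton z)) hAV)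
      _ = ∫ ω, V ω ∂μ :=
          integral_cond_preimage_eq_integral hind hV.aemeasurable hZ aestronglyMeasurable_id
            (measurableSet_singleton z) hz
  rw [dE, hcond hV₁ hind₁ hZ₁ hA₁, hcond hV₀ hind₀ hZ₀ hA₀, integral_sub hV₁ hV₀]

end Conditioning

section Switching

/-- The switching equation of the potential outcome model: the value `a` under treatment `d = 1`
and the value `b` under `d = 0`, encoded as an affine function of `d`. -/
def switch (d a b : ℝ) : ℝ := a * d + b * (1 - d)

@[simp] lemma switch_one (a b : ℝ) : switch 1 a b = a := by simp [switch]

@[simp] lemma switch_zero (a b : ℝ) : switch 0 a b = b := by simp [switch]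

lemma switch_eq_zero_or_one {d a b : ℝ} (hd : d = 0 ∨ d = 1) (ha : a = 0 ∨ a = 1)
    (hb : b = 0 ∨ b = 1) : switch d a b = 0 ∨ switch d a b = 1 := by
  rcases hd with rfl | rfl <;> simpa

lemma measurable_switch {d a b : Ω → ℝ} (hd : Measurable d) (ha : Measurable a)
    (hb : Measurable b) : Measurable fun ω ↦ switch (d ω) (a ω) (b ω) := by
  unfold switch
  fun_prop

lemma integrable_switch {μ : Measure Ω} {d a b : Ω → ℝ} (hd : AEStronglyMeasurable d μ)
    (hd01 : ∀ᵐ ω ∂μ, d ω = 0 ∨ d ω = 1) (ha : Integrable a μ) (hb : Integrable b μ) :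
    Integrable (fun ω ↦ switch (d ω) (a ω) (b ω)) μ := by
  have hbound : ∀ᵐ ω ∂μ, ‖d ω‖ ≤ 1 ∧ ‖1 - d ω‖ ≤ 1 := by
    filter_upwards [hd01] with ω h
    rcases h with h | h <;> simp [h]
  exact (ha.mul_bdd hd (hbound.mono fun _ h ↦ h.1)).add
    (hb.mul_bdd (aestronglyMeasurable_const.sub hd) (hbound.mono fun _ h ↦ h.2))

end Switching

section PotentialVariables

/-- The second treatment `D2(z, D1(z))` that results from setting the instrument to `z`. -/
def potentialD2 {α : Type*} (D1 : Bool → α → ℝ) (D2 : Bool → Bool → α → ℝ) (z : Bool) (ω : α) :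
    ℝ :=
  switch (D1 z ω) (D2 z true ω) (D2 z false ω)

/-- The outcome `Y(z, D1(z), D2(z, D1(z)))` that results from setting the instrument to `z`. -/
def potentialY {α : Type*} (D1 : Bool → α → ℝ) (D2 : Bool → Bool → α → ℝ)
    (Yp : Bool → Bool → Bool → α → ℝ) (z : Bool) (ω : α) : ℝ :=
  switch (potentialD2 D1 D2 z ω)
    (switch (D1 z ω) (Yp z true true ω) (Yp z false true ω))
    (switch (D1 z ω) (Yp z true false ω) (Yp z false false ω))

lemma obsY_eq_potentialY_true {α : Type*} {D1 : Bool → α → ℝ} {D2 : Bool → Bool → α → ℝ}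
    {Yp : Bool → Bool → Bool → α → ℝ} {Z : α → ℝ} {ω : α} (hω : Z ω = 1) :
    obsY Z D1 D2 Yp ω = potentialY D1 D2 Yp true ω := by
  simp only [obsY, obsD2, obsD1, potentialY, potentialD2, switch, hω]
  ring

lemma obsY_eq_potentialY_false {α : Type*} {D1 : Bool → α → ℝ} {D2 : Bool → Bool → α → ℝ}
    {Yp : Bool → Bool → Bool → α → ℝ} {Z : α → ℝ} {ω : α} (hω : Z ω = 0) :
    obsY Z D1 D2 Yp ω = potentialY D1 D2 Yp false ω := by
  simp only [obsY, obsD2, obsD1, potentialY, potentialD2, switch, hω]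
  ring

variable {D1 : Bool → Ω → ℝ} {D2 : Bool → Bool → Ω → ℝ} {Yp : Bool → Bool → Bool → Ω → ℝ}
  {z : Bool}

lemma measurable_potentialD2 (hD1 : Measurable (D1 z)) (hD2 : ∀ d1, Measurable (D2 z d1)) :
    Measurable (potentialD2 D1 D2 z) :=
  measurable_switch hD1 (hD2 true) (hD2 false)

lemma measurable_potentialY (hD1 : Measurable (D1 z)) (hD2 : ∀ d1, Measurable (D2 z d1))
    (hY : ∀ d1 d2, Measurable (Yp z d1 d2)) : Measurable (potentialY D1 D2 Yp z) :=
  measurable_switch (measurable_potentialD2 hD1 hD2)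
    (measurable_switch hD1 (hY true true) (hY false true))
    (measurable_switch hD1 (hY true false) (hY false false))

lemma integrable_potentialY {μ : Measure Ω} (hD1 : Measurable (D1 z))
    (hD2 : ∀ d1, Measurable (D2 z d1)) (hY : ∀ d1 d2, Integrable (Yp z d1 d2) μ)
    (hD101 : ∀ ω, D1 z ω = 0 ∨ D1 z ω = 1) (hD201 : ∀ d1 ω, D2 z d1 ω = 0 ∨ D2 z d1 ω = 1) :
    Integrable (potentialY D1 D2 Yp z) μ := by
  have hinner (d2 : Bool) :
      Integrable (fun ω ↦ switch (D1 z ω) (Yp z true d2 ω) (Yp z false d2 ω)) μ :=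
    integrable_switch hD1.aestronglyMeasurable (.of_forall hD101) (hY true d2) (hY false d2)
  exact integrable_switch (measurable_potentialD2 hD1 hD2).aestronglyMeasurable
    (.of_forall fun ω ↦ switch_eq_zero_or_one (hD101 ω) (hD201 true ω) (hD201 false ω))
    (hinner true) (hinner false)

lemma indepFun_potentialY {γ : Type*} [MeasurableSpace γ] {μ : Measure Ω} {Z : Ω → γ}
    (hind : IndepFun
      (fun ω ↦ ((fun z ↦ D1 z ω), (fun z d1 ↦ D2 z d1 ω), (fun z d1 d2 ↦ Yp z d1 d2 ω))) Z μ) :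
    IndepFun (potentialY D1 D2 Yp z) Z μ := by
  -- `potentialY`, read with the coordinate functions as data, sends the data vector to `Y^z`.
  have hmeas : Measurable
      (potentialY (α := (Bool → ℝ) × (Bool → Bool → ℝ) × (Bool → Bool → Bool → ℝ))
        (fun z x ↦ x.1 z) (fun z d1 x ↦ x.2.1 z d1) (fun z d1 d2 x ↦ x.2.2 z d1 d2) z) :=
    measurable_potentialY (by fun_prop) (by fun_prop) (by fun_prop)
  exact hind.comp hmeas measurable_id

end PotentialVariables

section ResponseTypes

lemma never_or_complier_or_always {d₀ d₁ : ℝ} (h₀ : d₀ = 0 ∨ d₀ = 1) (h₁ : d₁ = 0 ∨ d₁ = 1)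
    (hle : d₀ ≤ d₁) : d₁ = 0 ∧ d₀ = 0 ∨ d₁ = 1 ∧ d₀ = 0 ∨ d₁ = 1 ∧ d₀ = 1 := by
  grind

lemma potentialY_sub_eq_sum_indicator {α : Type*} {D1 : Bool → α → ℝ} {D2 : Bool → Bool → α → ℝ}
    {Yp : Bool → Bool → Bool → α → ℝ} {ω : α}
    (hD101 : ∀ z, D1 z ω = 0 ∨ D1 z ω = 1) (hD201 : ∀ z d1, D2 z d1 ω = 0 ∨ D2 z d1 ω = 1)
    (hmono1 : D1 false ω ≤ D1 true ω)
    (hmono2 : potentialD2 D1 D2 false ω ≤ potentialD2 D1 D2 true ω)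
    (hexcl : ∀ d1 d2, Yp true d1 d2 ω = Yp false d1 d2 ω) :
    potentialY D1 D2 Yp true ω - potentialY D1 D2 Yp false ω =
      (CCev D1 D2).indicator (Yp true true true - Yp true false false) ω +
      (CNev D1 D2).indicator (Yp true true false - Yp true false false) ω +
      (CAev D1 D2).indicator (Yp true true true - Yp true false true) ω +
      (NCev D1 D2).indicator (Yp true false true - Yp true false false) ω +
      (ACev D1 D2).indicator (Yp true true true - Yp true true false) ω := by
  have hD2 (z : Bool) : potentialD2 D1 D2 z ω = 0 ∨ potentialD2 D1 D2 z ω = 1 :=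
    switch_eq_zero_or_one (hD101 z) (hD201 z true) (hD201 z false)
  have htype1 := never_or_complier_or_always (hD101 false) (hD101 true) hmono1
  have htype2 := never_or_complier_or_always (hD2 false) (hD2 true) hmono2
  rcases htype1 with ⟨h11, h10⟩ | ⟨h11, h10⟩ | ⟨h11, h10⟩ <;>
    simp only [potentialD2, h11, h10, switch_one, switch_zero] at htype2 <;>
    rcases htype2 with ⟨h21, h20⟩ | ⟨h21, h20⟩ | ⟨h21, h20⟩ <;>
    simp [potentialY, potentialD2, CCev, CNev, CAev, NCev, ACev, Set.indicator, hexcl,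
      h11, h10, h21, h20]

variable {D1 : Bool → Ω → ℝ} {D2 : Bool → Bool → Ω → ℝ}

lemma measurableSet_CCev (hD1 : ∀ z, Measurable (D1 z)) (hD2 : ∀ z d1, Measurable (D2 z d1)) :
    MeasurableSet (CCev D1 D2) := by
  unfold CCev
  measurability

lemma measurableSet_CNev (hD1 : ∀ z, Measurable (D1 z)) (hD2 : ∀ z d1, Measurable (D2 z d1)) :
    MeasurableSet (CNev D1 D2) := by
  unfold CNev
  measurability

lemma measurableSet_CAev (hD1 : ∀ z, Measurable (D1 z)) (hD2 : ∀ z d1, Measurable (D2 z d1)) :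
    MeasurableSet (CAev D1 D2) := by
  unfold CAev
  measurability

lemma measurableSet_NCev (hD1 : ∀ z, Measurable (D1 z)) (hD2 : ∀ z d1, Measurable (D2 z d1)) :
    MeasurableSet (NCev D1 D2) := by
  unfold NCev
  measurability

lemma measurableSet_ACev (hD1 : ∀ z, Measurable (D1 z)) (hD2 : ∀ z d1, Measurable (D2 z d1)) :
    MeasurableSet (ACev D1 D2) := by
  unfold ACev
  measurability

end ResponseTypes

section ReducedForm

variable {μ : Measure Ω} {D1 : Bool → Ω → ℝ} {D2 : Bool → Bool → Ω → ℝ}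
  {Yp : Bool → Bool → Bool → Ω → ℝ}

lemma dE_obsY_eq_integral_potentialY_sub [IsFiniteMeasure μ] {Z : Ω → ℝ} (hZ : Measurable Z)
    (hZ₁ : μ (Z ⁻¹' {1}) ≠ 0) (hZ₀ : μ (Z ⁻¹' {0}) ≠ 0)
    (hint : ∀ z, Integrable (potentialY D1 D2 Yp z) μ)
    (hind : ∀ z, IndepFun (potentialY D1 D2 Yp z) Z μ) :
    dE μ Z (obsY Z D1 D2 Yp) =
      ∫ ω, (potentialY D1 D2 Yp true ω - potentialY D1 D2 Yp false ω) ∂μ :=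
  dE_eq_integral_sub hZ hZ₁ hZ₀ (hint true) (hint false) (hind true) (hind false)
    (fun _ ↦ obsY_eq_potentialY_true) (fun _ ↦ obsY_eq_potentialY_false)

lemma integral_potentialY_sub_eq_sum_setIntegral (hD1 : ∀ z, Measurable (D1 z))
    (hD2 : ∀ z d1, Measurable (D2 z d1)) (hY : ∀ d1 d2, Integrable (Yp true d1 d2) μ)
    (hD101 : ∀ z ω, D1 z ω = 0 ∨ D1 z ω = 1) (hD201 : ∀ z d1 ω, D2 z d1 ω = 0 ∨ D2 z d1 ω = 1)
    (hmono1 : ∀ᵐ ω ∂μ, D1 false ω ≤ D1 true ω)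
    (hmono2 : ∀ᵐ ω ∂μ, potentialD2 D1 D2 false ω ≤ potentialD2 D1 D2 true ω)
    (hexcl : ∀ d1 d2, ∀ᵐ ω ∂μ, Yp true d1 d2 ω = Yp false d1 d2 ω) :
    ∫ ω, (potentialY D1 D2 Yp true ω - potentialY D1 D2 Yp false ω) ∂μ =
      (∫ ω in CCev D1 D2, (Yp true true true ω - Yp true false false ω) ∂μ) +
      (∫ ω in CNev D1 D2, (Yp true true false ω - Yp true false false ω) ∂μ) +
      (∫ ω in CAev D1 D2, (Yp true true true ω - Yp true false true ω) ∂μ) +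
      (∫ ω in NCev D1 D2, (Yp true false true ω - Yp true false false ω) ∂μ) +
      (∫ ω in ACev D1 D2, (Yp true true true ω - Yp true true false ω) ∂μ) := by
  have hCC := measurableSet_CCev hD1 hD2
  have hCN := measurableSet_CNev hD1 hD2
  have hCA := measurableSet_CAev hD1 hD2
  have hNC := measurableSet_NCev hD1 hD2
  have hAC := measurableSet_ACev hD1 hD2
  simp only [← integral_indicator, hCC, hCN, hCA, hNC, hAC]
  rw [← integral_add, ← integral_add, ← integral_add, ← integral_add]
  · refine integral_congr_ae ?_
    filter_upwards [hmono1, hmono2, ae_all_iff.2 fun d1 ↦ ae_all_iff.2 (hexcl d1)]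
      with ω hω1 hω2 hωY
    exact potentialY_sub_eq_sum_indicator (hD101 · ω) (hD201 · · ω) hω1 hω2 hωY
  all_goals fun_prop (disch := assumption)

end ReducedForm

theorem stmt_4_general {μ : Measure Ω} [IsFiniteMeasure μ]
    {Z : Ω → ℝ} {D1 : Bool → Ω → ℝ} {D2 : Bool → Bool → Ω → ℝ} {Yp : Bool → Bool → Bool → Ω → ℝ}
    (hZ : Measurable Z) (hD1 : ∀ z, Measurable (D1 z)) (hD2 : ∀ z d1, Measurable (D2 z d1))
    (hY : ∀ z d1 d2, Integrable (Yp z d1 d2) μ)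
    (hZ₁ : μ (Z ⁻¹' {1}) ≠ 0) (hZ₀ : μ (Z ⁻¹' {0}) ≠ 0)
    (hD101 : ∀ z ω, D1 z ω = 0 ∨ D1 z ω = 1) (hD201 : ∀ z d1 ω, D2 z d1 ω = 0 ∨ D2 z d1 ω = 1)
    (hind : ∀ z, IndepFun (potentialY D1 D2 Yp z) Z μ)
    (hmono1 : ∀ᵐ ω ∂μ, D1 false ω ≤ D1 true ω)
    (hmono2 : ∀ᵐ ω ∂μ, potentialD2 D1 D2 false ω ≤ potentialD2 D1 D2 true ω)
    (hexcl : ∀ d1 d2, ∀ᵐ ω ∂μ, Yp true d1 d2 ω = Yp false d1 d2 ω) :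
    dE μ Z (obsY Z D1 D2 Yp) =
      (∫ ω in CCev D1 D2, (Yp true true true ω - Yp true false false ω) ∂μ) +
      (∫ ω in CNev D1 D2, (Yp true true false ω - Yp true false false ω) ∂μ) +
      (∫ ω in CAev D1 D2, (Yp true true true ω - Yp true false true ω) ∂μ) +
      (∫ ω in NCev D1 D2, (Yp true false true ω - Yp true false false ω) ∂μ) +
      (∫ ω in ACev D1 D2, (Yp true true true ω - Yp true true false ω) ∂μ) := by
  have hint (z : Bool) : Integrable (potentialY D1 D2 Yp z) μ :=
    integrable_potentialY (hD1 z) (hD2 z) (hY z) (hD101 z) (hD201 z)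
  rw [dE_obsY_eq_integral_potentialY_sub hZ hZ₁ hZ₀ hint hind]
  exact integral_potentialY_sub_eq_sum_setIntegral hD1 hD2 (hY true) hD101 hD201 hmono1 hmono2
    hexcl

theorem stmt_4
    (μ : Measure Ω) [IsProbabilityMeasure μ]
    (Z : Ω → ℝ) (D1 : Bool → Ω → ℝ) (D2 : Bool → Bool → Ω → ℝ)
    (Yp : Bool → Bool → Bool → Ω → ℝ)
    (hZmeas : Measurable Z)
    (hD1meas : ∀ b, Measurable (D1 b))
    (hD2meas : ∀ b b', Measurable (D2 b b'))
    (hYmeas : ∀ z d1 d2, Measurable (Yp z d1 d2))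
    (hYint : ∀ z d1 d2, Integrable (Yp z d1 d2) μ)
    (hZ01 : ∀ ω, Z ω = 0 ∨ Z ω = 1)
    (hZpos : 0 < μ (Z ⁻¹' {1})) (hZlt : μ (Z ⁻¹' {1}) < 1)
    (hD101 : ∀ b ω, D1 b ω = 0 ∨ D1 b ω = 1)
    (hD201 : ∀ b b' ω, D2 b b' ω = 0 ∨ D2 b b' ω = 1)
    (hindep : IndepFun
      (fun ω => ((fun b => D1 b ω), (fun b b' => D2 b b' ω), (fun z d1 d2 => Yp z d1 d2 ω))) Z μ)
    (hrel1 : 0 < dE μ Z (obsD1 Z D1))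
    (hrel2 : 0 < dE μ Z (obsD2 Z D1 D2))
    (hrelAnd : 0 < dE μ Z (obsDand Z D1 D2))
    (hrelOr : 0 < dE μ Z (obsDor Z D1 D2))
    (hmono1 : ∀ᵐ ω ∂μ, D1 false ω ≤ D1 true ω)
    (hmono2 : ∀ᵐ ω ∂μ,
      D2 false true ω * D1 false ω + D2 false false ω * (1 - D1 false ω) ≤
        D2 true true ω * D1 true ω + D2 true false ω * (1 - D1 true ω))
    (hexcl : ∀ d1 d2, ∀ᵐ ω ∂μ, Yp true d1 d2 ω = Yp false d1 d2 ω) :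
    dE μ Z (obsY Z D1 D2 Yp) =
      (∫ ω in CCev D1 D2, (Yp true true true ω - Yp true false false ω) ∂μ) +
      (∫ ω in CNev D1 D2, (Yp true true false ω - Yp true false false ω) ∂μ) +
      (∫ ω in CAev D1 D2, (Yp true true true ω - Yp true false true ω) ∂μ) +
      (∫ ω in NCev D1 D2, (Yp true false true ω - Yp true false false ω) ∂μ) +
      (∫ ω in ACev D1 D2, (Yp true true true ω - Yp true true false ω) ∂μ) := by
  exact stmt_4_general hZmeas hD1meas hD2meas hYint hZpos.ne'
    (measure_preimage_singleton_ne_zero hZ01 hZlt) hD101 hD201 (fun _ ↦ indepFun_potentialY hindep)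
    hmono1 hmono2 hexcl
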